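/- arXiv:1510.05013 — 3 statements merged into one kernel-verified Lean document; each statement's English description precedes it below -/
import Mathlib

section
/- Let A be a partial H-module algebra and 𝓘 an ideal of the partial smash product A#H. Then 𝓘 ∩ A (identifying A with A#1_H) is an H-stable ideal of A. -/
open TensorProduct

noncomputable section

variable (k : Type*) [Field k]

/-- The "Sweedler sum" `h ↦ Σ f(h₁) * g(h₂)`. -/
def sweedler {H A : Type*} [Ring H] [HopfAlgebra k H]
    [Ring A] [Algebra k A] (f g : H →ₗ[k] A) : H →ₗ[k] A :=
  (LinearMap.mul' k A) ∘ₗ (TensorProduct.map f g) ∘ₗ Coalgebra.comul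

/-- A (left) partial `H`-module algebra structure on a unital algebra `A`:
`1_H · a = a`, `h · (ab) = Σ (h₁·a)(h₂·b)` and `h·(g·b) = Σ (h₁·1)((h₂ g)·b)`. -/
structure PartialModuleAlgebra (H A : Type*) [Ring H] [HopfAlgebra k H]
    [Ring A] [Algebra k A] where
  act : H →ₗ[k] A →ₗ[k] A
  one_act : ∀ a : A, act 1 a = a
  act_mul : ∀ (h : H) (a b : A),
    act h (a * b) = sweedler k (act.flip a) (act.flip b) h
  act_act : ∀ (h g : H) (b : A),
    act h (act g b) =
      sweedler k (act.flip 1) ((act.flip b) ∘ₗ LinearMap.mulRight k g) h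

variable {H A : Type*} [Ring H] [HopfAlgebra k H] [Ring A] [Algebra k A]

/-- A (two-sided) ideal of `A`, encoded as a `k`-submodule closed under multiplication
by elements of `A` on both sides. -/
def IsIdeal (I : Submodule k A) : Prop :=
  ∀ a ∈ I, ∀ b : A, a * b ∈ I ∧ b * a ∈ I

/-- An `H`-stable subspace: `H · I ⊆ I`. -/
def Hstable (ξ : PartialModuleAlgebra k H A) (I : Submodule k A) : Prop :=
  ∀ (h : H), ∀ x ∈ I, ξ.act h x ∈ I

/-- `(I : H) = {x ∈ I | h · x ∈ I for all h ∈ H}`. -/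
def colonH (ξ : PartialModuleAlgebra k H A) (I : Submodule k A) : Submodule k A :=
  I ⊓ ⨅ h : H, Submodule.comap (ξ.act h) I

/-- `μ` realizes the smash-product multiplication on `A ⊗ H`:
`(a # h)(b # g) = Σ a(h₁·b) # h₂ g`. -/
def SmashMulFormula (ξ : PartialModuleAlgebra k H A)
    (μ : (A ⊗[k] H) →ₗ[k] (A ⊗[k] H) →ₗ[k] (A ⊗[k] H)) : Prop :=
  ∀ (a b : A) (h g : H),
    μ (a ⊗ₜ[k] h) (b ⊗ₜ[k] g) =
      (TensorProduct.map ((LinearMap.mulLeft k a) ∘ₗ ξ.act.flip b)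
        (LinearMap.mulRight k g)) (Coalgebra.comul h)

variable (H A) in
/-- The element `1_A ⊗ 1_H`. -/
def smashE : A ⊗[k] H := (1 : A) ⊗ₜ[k] (1 : H)

/-- The partial smash product `A # H = (A ⊗ H)(1_A # 1_H)` as a subspace of `A ⊗ H`. -/
def smashS (μ : (A ⊗[k] H) →ₗ[k] (A ⊗[k] H) →ₗ[k] (A ⊗[k] H)) : Submodule k (A ⊗[k] H) :=
  LinearMap.range (μ.flip (smashE k H A))

/-- The canonical embedding `A → A # H`, `a ↦ a # 1_H`. -/
def smashF (μ : (A ⊗[k] H) →ₗ[k] (A ⊗[k] H) →ₗ[k] (A ⊗[k] H)) : A →ₗ[k] A ⊗[k] H :=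
  (μ.flip (smashE k H A)) ∘ₗ ((TensorProduct.mk k A H).flip 1)

/-- An ideal of the partial smash product `A # H` (in the corner model). -/
def IsSmashIdeal (μ : (A ⊗[k] H) →ₗ[k] (A ⊗[k] H) →ₗ[k] (A ⊗[k] H))
    (I : Submodule k (A ⊗[k] H)) : Prop :=
  I ≤ smashS k μ ∧ ∀ x ∈ smashS k μ, ∀ i ∈ I, μ x i ∈ I ∧ μ i x ∈ I

/-!
The product of `A ⊗ H` can be written in the convolution algebra `Hom(H, A ⊗ H)`: if
`β_b h = (h · b) ⊗ 1` and `γ h = 1 ⊗ h`, then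
`(a # h)(b # g) = (a ⊗ 1) * (β_b ⋆ γ) h * (1 ⊗ g)` in the ordinary tensor product algebra.
The axioms of a partial action become `β_{bc} = β_b ⋆ β_c` and `β_{g · c} = β_1 ⋆ β_c(- g)`, and
both bracketings of `(a # h)(b # g)(c # l)` equal
`(a ⊗ 1) * (β_b ⋆ (β_c ⋆ γ)(- g)) h * (1 ⊗ l)`. Hence the smash product is associative, and
`1 # 1` is a left unit of it, so an ideal `𝓘` of the corner `A # H` absorbs all of `A ⊗ H` from
the left, and from the right up to a factor `1 # 1`. Since `γ ⋆ (γ ∘ S) = 1`,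
`Σ (1 # h₁)(x # 1)(1 # S h₂) = (β_x ⋆ γ ⋆ (γ ∘ S)) h = β_x h = (h · x) # 1`,
which puts `(h · x) # 1 = ((h · x) # 1)(1 # 1)` in `𝓘` as soon as `x # 1` lies there.
-/

section Convolution

open Coalgebra WithConv

variable {R B C ι : Type*} [CommSemiring R] [Semiring B] [Algebra R B] [Semiring C] [Bialgebra R C]

/-- The right translate `h ↦ f (h g)` of an element `f` of the convolution algebra `Hom(C, B)`,
by which the product `h₂ g` enters the multiplication of the smash product. -/
def convTranslate (g : C) (f : WithConv (C →ₗ[R] B)) : WithConv (C →ₗ[R] B) :=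
  toConv (f.ofConv ∘ₗ LinearMap.mulRight R g)

@[simp]
lemma convTranslate_apply (g : C) (f : WithConv (C →ₗ[R] B)) (h : C) :
    convTranslate g f h = f (h * g) := rfl

lemma convTranslate_convMul {g : C} (r : Repr R g ι) (f e : WithConv (C →ₗ[R] B)) :
    convTranslate g (f * e) =
      ∑ i ∈ r.index, convTranslate (r.left i) f * convTranslate (r.right i) e := by
  ext h
  simp only [convTranslate_apply, ofConv_sum, LinearMap.sum_apply,
    ((ℛ R h).mul r).convMul_apply, (ℛ R h).convMul_apply]
  rw [Finset.sum_comm]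
  exact Finset.sum_product _ _ _

variable (R B C) in
/-- The inclusion `h ↦ 1 ⊗ h` as an element of the convolution algebra `Hom(C, B ⊗ C)`, where its
inverse is given by the antipode when `C` is a Hopf algebra. -/
def convInclude : WithConv (C →ₗ[R] B ⊗[R] C) :=
  toConv Algebra.TensorProduct.includeRight.toLinearMap

@[simp]
lemma convInclude_apply (h : C) : convInclude R B C h = 1 ⊗ₜ h := rfl

lemma convMul_convInclude_apply_mul (f : WithConv (C →ₗ[R] B ⊗[R] C)) (h g : C) :
    (f * convInclude R B C) h * (1 ⊗ₜ g) = (f * convTranslate g (convInclude R B C)) h := by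
  simp [(ℛ R h).convMul_apply, Finset.sum_mul, mul_assoc]

lemma convInclude_mul_antipode {H : Type*} [Semiring H] [HopfAlgebra R H] :
    convInclude R B H * toConv ((convInclude R B H).ofConv ∘ₗ HopfAlgebra.antipode R) = 1 := by
  ext h
  simp only [(ℛ R h).convMul_apply, convInclude_apply, LinearMap.comp_apply,
    Algebra.TensorProduct.tmul_mul_tmul, mul_one, LinearMap.convOne_apply]
  rw [← tmul_sum, HopfAlgebra.sum_mul_antipode_eq_algebraMap_counit]
  exact Algebra.TensorProduct.includeRight.commutes _

end Convolution

section SmashProduct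

open Coalgebra WithConv

variable {k}

namespace PartialModuleAlgebra

variable (ξ : PartialModuleAlgebra k H A)

/-- The orbit map `h ↦ (h · b) ⊗ 1` of `b`, in which the partial action enters the multiplication
of the smash product. It takes values in `A ⊗ H` rather than `A` so that it can be convolved with
`convInclude`. -/
def orbit (b : A) : WithConv (H →ₗ[k] A ⊗[k] H) :=
  toConv (Algebra.TensorProduct.includeLeft.toLinearMap ∘ₗ ξ.act.flip b)

@[simp]
lemma orbit_apply (b : A) (h : H) : ξ.orbit b h = ξ.act h b ⊗ₜ 1 := rfl

lemma orbit_mul (a b : A) : ξ.orbit (a * b) = ξ.orbit a * ξ.orbit b := by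
  ext h
  have act_mul := ξ.act_mul h a b
  simp only [sweedler, LinearMap.comp_apply, ← (ℛ k h).eq, map_sum, map_tmul,
    LinearMap.mul'_apply, LinearMap.flip_apply] at act_mul
  simp [(ℛ k h).convMul_apply, act_mul, sum_tmul]

lemma orbit_act (g : H) (b : A) :
    ξ.orbit (ξ.act g b) = ξ.orbit 1 * convTranslate g (ξ.orbit b) := by
  ext h
  have act_act := ξ.act_act h g b
  simp only [sweedler, LinearMap.comp_apply, ← (ℛ k h).eq, map_sum, map_tmul,
    LinearMap.mul'_apply, LinearMap.flip_apply, LinearMap.mulRight_apply] at act_act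
  simp [(ℛ k h).convMul_apply, act_act, sum_tmul]

lemma orbit_mul_act (a b : A) (g : H) :
    ξ.orbit (a * ξ.act g b) = ξ.orbit a * convTranslate g (ξ.orbit b) := by
  rw [orbit_mul, orbit_act, ← mul_assoc, ← orbit_mul, mul_one]

end PartialModuleAlgebra

namespace SmashMulFormula

variable {ξ : PartialModuleAlgebra k H A} {μ : (A ⊗[k] H) →ₗ[k] (A ⊗[k] H) →ₗ[k] (A ⊗[k] H)}
  (hμ : SmashMulFormula k ξ μ)
include hμ

lemma tmul_tmul_eq_sum {ι : Type*} {h : H} (r : Repr k h ι) (a b : A) (g : H) :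
    μ (a ⊗ₜ h) (b ⊗ₜ g) = ∑ i ∈ r.index, (a * ξ.act (r.left i) b) ⊗ₜ (r.right i * g) := by
  simp [hμ a b h g, ← r.eq]

lemma tmul_tmul (a b : A) (h g : H) :
    μ (a ⊗ₜ h) (b ⊗ₜ g) = (a ⊗ₜ 1) * (ξ.orbit b * convInclude k A H) h * (1 ⊗ₜ g) := by
  simp [hμ.tmul_tmul_eq_sum (ℛ k h), (ℛ k h).convMul_apply, Finset.mul_sum, Finset.sum_mul]

lemma tmul_one_tmul (a b : A) (g : H) : μ (a ⊗ₜ 1) (b ⊗ₜ g) = (a * b) ⊗ₜ g := by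
  simp [hμ a b 1 g, Algebra.TensorProduct.one_def, ξ.one_act]

lemma mul_tmul_tmul_tmul (a b c : A) (h g l : H) :
    μ (μ (a ⊗ₜ h) (b ⊗ₜ g)) (c ⊗ₜ l) =
      (a ⊗ₜ 1) * (ξ.orbit b * convTranslate g (ξ.orbit c * convInclude k A H)) h * (1 ⊗ₜ l) := by
  rw [hμ.tmul_tmul_eq_sum (ℛ k h), (ℛ k h).convMul_apply, map_sum, LinearMap.sum_apply,
    Finset.mul_sum, Finset.sum_mul]
  refine Finset.sum_congr rfl fun i _ ↦ ?_
  rw [hμ.tmul_tmul, convTranslate_apply, PartialModuleAlgebra.orbit_apply, ← mul_assoc,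
    Algebra.TensorProduct.tmul_mul_tmul, mul_one]

lemma tmul_mul_tmul_tmul (a b c : A) (h g l : H) :
    μ (a ⊗ₜ h) (μ (b ⊗ₜ g) (c ⊗ₜ l)) =
      (a ⊗ₜ 1) * (ξ.orbit b * convTranslate g (ξ.orbit c * convInclude k A H)) h * (1 ⊗ₜ l) := by
  have one_tmul_mul (g' : H) : (1 : A) ⊗ₜ[k] (g' * l) = (1 ⊗ₜ g') * (1 ⊗ₜ l) := by simp
  rw [hμ.tmul_tmul_eq_sum (ℛ k g), map_sum, convTranslate_convMul (ℛ k g), Finset.mul_sum,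
    ofConv_sum, LinearMap.sum_apply, Finset.mul_sum, Finset.sum_mul]
  refine Finset.sum_congr rfl fun i _ ↦ ?_
  rw [hμ.tmul_tmul, ξ.orbit_mul_act, one_tmul_mul, ← mul_assoc, mul_assoc (a ⊗ₜ 1),
    convMul_convInclude_apply_mul, mul_assoc (ξ.orbit b)]

protected lemma mul_assoc (x y z : A ⊗[k] H) : μ (μ x y) z = μ x (μ y z) := by
  induction x with
  | zero => simp only [map_zero, LinearMap.zero_apply]
  | add x x' hx hx' => simp only [map_add, LinearMap.add_apply, hx, hx']
  | tmul a h =>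
    induction y with
    | zero => simp only [map_zero, LinearMap.zero_apply]
    | add y y' hy hy' => simp only [map_add, LinearMap.add_apply, hy, hy']
    | tmul b g =>
      induction z with
      | zero => simp only [map_zero]
      | add z z' hz hz' => simp only [map_add, hz, hz']
      | tmul c l => rw [hμ.mul_tmul_tmul_tmul, hμ.tmul_mul_tmul_tmul]

lemma smashE_mul (x : A ⊗[k] H) : μ (smashE k H A) x = x := by
  induction x with
  | zero => exact map_zero _
  | add x y hx hy => rw [map_add, hx, hy]
  | tmul a h => rw [smashE, hμ.tmul_one_tmul, one_mul]

lemma smashF_apply (a : A) : smashF k μ a = a ⊗ₜ 1 := by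
  simp [smashF, smashE, hμ.tmul_one_tmul]

lemma sum_tmul_antipode {ι : Type*} {h : H} (r : Repr k h ι) (x : A) :
    ∑ i ∈ r.index, μ (1 ⊗ₜ r.left i) (x ⊗ₜ HopfAlgebra.antipode k (r.right i)) =
      ξ.act h x ⊗ₜ 1 := by
  let γ := convInclude k A H
  let γS := toConv (γ.ofConv ∘ₗ HopfAlgebra.antipode k)
  calc
    _ = (ξ.orbit x * γ * γS) h := by
      rw [r.convMul_apply]
      refine Finset.sum_congr rfl fun i _ ↦ ?_
      rw [hμ.tmul_tmul, ← Algebra.TensorProduct.one_def, one_mul]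
      rfl
    _ = ξ.orbit x h := by rw [mul_assoc, convInclude_mul_antipode, mul_one]
    _ = ξ.act h x ⊗ₜ 1 := rfl

end SmashMulFormula

namespace IsSmashIdeal

variable {ξ : PartialModuleAlgebra k H A} {μ : (A ⊗[k] H) →ₗ[k] (A ⊗[k] H) →ₗ[k] (A ⊗[k] H)}
  {I : Submodule k (A ⊗[k] H)} (hI : IsSmashIdeal k μ I) (hμ : SmashMulFormula k ξ μ)
include hI hμ

lemma mul_mem_left (x : A ⊗[k] H) {i : A ⊗[k] H} (hi : i ∈ I) : μ x i ∈ I := by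
  have h := (hI.2 (μ x (smashE k H A)) ⟨x, rfl⟩ i hi).1
  rwa [hμ.mul_assoc, hμ.smashE_mul] at h

lemma mul_mul_smashE_mem (x : A ⊗[k] H) {i : A ⊗[k] H} (hi : i ∈ I) :
    μ (μ i x) (smashE k H A) ∈ I := by
  rw [hμ.mul_assoc]
  exact (hI.2 (μ x (smashE k H A)) ⟨x, rfl⟩ i hi).2

theorem isIdeal_comap_smashF : IsIdeal k (I.comap (smashF k μ)) := by
  intro a ha b
  rw [Submodule.mem_comap, hμ.smashF_apply] at ha
  simp only [Submodule.mem_comap, hμ.smashF_apply]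
  constructor
  · simpa [smashE, hμ.tmul_one_tmul] using hI.mul_mul_smashE_mem hμ (b ⊗ₜ 1) ha
  · simpa [hμ.tmul_one_tmul] using hI.mul_mem_left hμ (b ⊗ₜ 1) ha

theorem hstable_comap_smashF : Hstable k ξ (I.comap (smashF k μ)) := by
  intro h x hx
  rw [Submodule.mem_comap, hμ.smashF_apply] at hx ⊢
  have one_tmul_mul_mem (u v : H) : μ (μ (1 ⊗ₜ u) (x ⊗ₜ v)) (smashE k H A) ∈ I := by
    have := hI.mul_mul_smashE_mem hμ (1 ⊗ₜ v) (hI.mul_mem_left hμ (1 ⊗ₜ u) hx)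
    rwa [hμ.mul_assoc (1 ⊗ₜ u), hμ.tmul_one_tmul, mul_one] at this
  have sum_mem := I.sum_mem fun i (_ : i ∈ (ℛ k h).index) ↦
    one_tmul_mul_mem ((ℛ k h).left i) (HopfAlgebra.antipode k ((ℛ k h).right i))
  rwa [← LinearMap.sum_apply, ← map_sum, hμ.sum_tmul_antipode, smashE, hμ.tmul_one_tmul,
    mul_one] at sum_mem

end IsSmashIdeal

end SmashProduct

/-- If `𝓘` is an ideal of the partial smash product `A # H`, then `𝓘 ∩ A` (the preimage of
`𝓘` under `a ↦ a # 1_H`) is an `H`-stable ideal of `A`. -/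
theorem smashIdeal_inter_A (ξ : PartialModuleAlgebra k H A)
    (μ : (A ⊗[k] H) →ₗ[k] (A ⊗[k] H) →ₗ[k] (A ⊗[k] H)) (hμ : SmashMulFormula k ξ μ)
    (I : Submodule k (A ⊗[k] H)) (hI : IsSmashIdeal k μ I) :
    IsIdeal k (Submodule.comap (smashF k μ) I) ∧
    Hstable k ξ (Submodule.comap (smashF k μ) I) := by
  exact ⟨hI.isIdeal_comap_smashF hμ, hI.hstable_comap_smashF hμ⟩
end
end

section
/- Let A be a partial H-module algebra, M ⊆ A an Hm-system, and 𝔭 an H-stable ideal of A maximal with respect to the property 𝔭 ∩ M = ∅. Then 𝔭 is H-prime. -/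
open TensorProduct

noncomputable section

variable (k : Type*) [Field k]

variable {H A : Type*} [Ring H] [HopfAlgebra k H] [Ring A] [Algebra k A]

/-- The product of two ideals of `A`. -/
def idealProd (I J : Submodule k A) : Submodule k A :=
  Submodule.span k {z | ∃ a ∈ I, ∃ b ∈ J, z = a * b}

/-- An `H`-prime ideal: a proper `H`-stable ideal `𝔭` such that for all `H`-stable ideals
`I, J`, `IJ ⊆ 𝔭` implies `I ⊆ 𝔭` or `J ⊆ 𝔭`. -/
def IsHPrime (ξ : PartialModuleAlgebra k H A) (p : Submodule k A) : Prop :=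
  IsIdeal k p ∧ Hstable k ξ p ∧ p ≠ ⊤ ∧
    ∀ I J : Submodule k A, IsIdeal k I → Hstable k ξ I → IsIdeal k J → Hstable k ξ J →
      idealProd k I J ≤ p → I ≤ p ∨ J ≤ p

/-- An `H`-semiprime ideal: a proper `H`-stable ideal `𝔰` such that `I² ⊆ 𝔰` implies
`I ⊆ 𝔰` for every `H`-stable ideal `I`. -/
def IsHSemiprime (ξ : PartialModuleAlgebra k H A) (s : Submodule k A) : Prop :=
  IsIdeal k s ∧ Hstable k ξ s ∧ s ≠ ⊤ ∧
    ∀ I : Submodule k A, IsIdeal k I → Hstable k ξ I → idealProd k I I ≤ s → I ≤ s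

/-- The subspace `A(H·x)A(H·y)`, spanned by the products `a (h·x) b (g·y)`. -/
def spanAxAy (ξ : PartialModuleAlgebra k H A) (x y : A) : Submodule k A :=
  Submodule.span k {w | ∃ (a : A) (h : H) (b : A) (g : H), w = a * ξ.act h x * b * ξ.act g y}

/-- An `Hm`-system: a nonempty `M ⊆ A` such that `A(H·x)A(H·y) ∩ M ≠ ∅` for `x, y ∈ M`. -/
def HmSystem (ξ : PartialModuleAlgebra k H A) (M : Set A) : Prop :=
  M.Nonempty ∧ ∀ x ∈ M, ∀ y ∈ M, ∃ z ∈ M, z ∈ spanAxAy k ξ x y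

/-- An `Hn`-system: a nonempty `N ⊆ A` such that `A(H·x)A(H·x) ∩ N ≠ ∅` for `x ∈ N`. -/
def HnSystem (ξ : PartialModuleAlgebra k H A) (N : Set A) : Prop :=
  N.Nonempty ∧ ∀ x ∈ N, ∃ z ∈ N, z ∈ spanAxAy k ξ x x

/-- The `H`-radical `√_H(I)` of an `H`-stable ideal `I`:
`{x | every Hm-system containing x meets I}`. -/
def Hradical (ξ : PartialModuleAlgebra k H A) (I : Submodule k A) : Set A :=
  {x : A | ∀ M : Set A, HmSystem k ξ M → x ∈ M → (M ∩ (I : Set A)).Nonempty}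

/-!
If `I` and `J` are `H`-stable ideals not contained in `𝔭`, maximality forces both `𝔭 + I` and
`𝔭 + J` to meet `M`. The `Hm`-system condition then makes `(𝔭 + I)(𝔭 + J)` meet `M`; but
`IJ ⊆ 𝔭` would give `(𝔭 + I)(𝔭 + J) ⊆ 𝔭`, contradicting `𝔭 ∩ M = ∅`.
-/

theorem idealProd_eq_mul (I J : Submodule k A) : idealProd k I J = I * J := by
  apply le_antisymm
  · rw [idealProd, Submodule.span_le]
    rintro _ ⟨a, ha, b, hb, rfl⟩
    exact Submodule.mul_mem_mul ha hb
  · exact Submodule.mul_le.2 fun a ha b hb ↦ Submodule.subset_span ⟨a, ha, b, hb, rfl⟩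

section

variable {k}

theorem IsIdeal.sup {I J : Submodule k A} (hI : IsIdeal k I) (hJ : IsIdeal k J) :
    IsIdeal k (I ⊔ J) := by
  intro x hx c
  obtain ⟨a, ha, b, hb, rfl⟩ := Submodule.mem_sup.1 hx
  rw [add_mul, mul_add]
  exact ⟨Submodule.add_mem_sup (hI a ha c).1 (hJ b hb c).1,
    Submodule.add_mem_sup (hI a ha c).2 (hJ b hb c).2⟩

theorem IsIdeal.mul_le_left {I : Submodule k A} (hI : IsIdeal k I) (N : Submodule k A) :
    I * N ≤ I :=
  Submodule.mul_le.2 fun a ha b _ ↦ (hI a ha b).1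

theorem IsIdeal.mul_le_right {I : Submodule k A} (hI : IsIdeal k I) (N : Submodule k A) :
    N * I ≤ I :=
  Submodule.mul_le.2 fun b _ a ha ↦ (hI a ha b).2

theorem IsIdeal.sup_mul_sup_le {p I J : Submodule k A} (hp : IsIdeal k p) (hIJ : I * J ≤ p) :
    (p ⊔ I) * (p ⊔ J) ≤ p := by
  rw [Submodule.sup_mul, Submodule.mul_sup I]
  exact sup_le (hp.mul_le_left _) (sup_le (hp.mul_le_right I) hIJ)

theorem Hstable.sup {ξ : PartialModuleAlgebra k H A} {I J : Submodule k A}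
    (hI : Hstable k ξ I) (hJ : Hstable k ξ J) : Hstable k ξ (I ⊔ J) := by
  intro h x hx
  obtain ⟨a, ha, b, hb, rfl⟩ := Submodule.mem_sup.1 hx
  rw [map_add]
  exact Submodule.add_mem_sup (hI h a ha) (hJ h b hb)

theorem spanAxAy_le_mul {ξ : PartialModuleAlgebra k H A} {I J : Submodule k A} {x y : A}
    (hI : IsIdeal k I) (hIs : Hstable k ξ I) (hJs : Hstable k ξ J) (hx : x ∈ I) (hy : y ∈ J) :
    spanAxAy k ξ x y ≤ I * J := by
  rw [spanAxAy, Submodule.span_le]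
  rintro _ ⟨a, h, b, g, rfl⟩
  have hahxb : a * ξ.act h x * b ∈ I := (hI _ (hI _ (hIs h x hx) a).2 b).1
  exact Submodule.mul_mem_mul hahxb (hJs g y hy)

/-- The family of `H`-stable two-sided ideals of `A`, as a set of `k`-subspaces. -/
def stableIdeals (ξ : PartialModuleAlgebra k H A) : Set (Submodule k A) :=
  {I | IsIdeal k I ∧ Hstable k ξ I}

theorem supClosed_stableIdeals (ξ : PartialModuleAlgebra k H A) : SupClosed (stableIdeals ξ) :=
  fun _ hI _ hJ ↦ ⟨hI.1.sup hJ.1, hI.2.sup hJ.2⟩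

theorem HmSystem.mul_inter_nonempty {ξ : PartialModuleAlgebra k H A} {M : Set A}
    (hM : HmSystem k ξ M) {I J : Submodule k A} (hI : IsIdeal k I) (hIs : Hstable k ξ I)
    (hJs : Hstable k ξ J) (hIM : ((I : Set A) ∩ M).Nonempty) (hJM : ((J : Set A) ∩ M).Nonempty) :
    (((I * J : Submodule k A) : Set A) ∩ M).Nonempty := by
  obtain ⟨x, hxI, hxM⟩ := hIM
  obtain ⟨y, hyJ, hyM⟩ := hJM
  obtain ⟨z, hzM, hz⟩ := hM.2 x hxM y hyM
  exact ⟨z, spanAxAy_le_mul hI hIs hJs hxI hyJ hz, hzM⟩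

theorem sup_inter_nonempty_of_maximal_disjoint {S : Set (Submodule k A)} (hS : SupClosed S)
    {M : Set A} {p I : Submodule k A}
    (hmax : Maximal (fun q ↦ q ∈ S ∧ Disjoint (q : Set A) M) p) (hI : I ∈ S) (hIp : ¬ I ≤ p) :
    (((p ⊔ I : Submodule k A) : Set A) ∩ M).Nonempty := by
  rw [← Set.not_disjoint_iff_nonempty_inter]
  intro hdisj
  exact hIp (le_sup_right.trans (hmax.le_of_ge ⟨hS hmax.prop.1 hI, hdisj⟩ le_sup_left))

theorem maximal_disjoint_isHPrime_general {S : Set (Submodule k A)} (hS : SupClosed S)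
    {M : Set A} (hne : M.Nonempty)
    (hM : ∀ I ∈ S, ∀ J ∈ S, ((I : Set A) ∩ M).Nonempty → ((J : Set A) ∩ M).Nonempty →
      (((I * J : Submodule k A) : Set A) ∩ M).Nonempty)
    {p : Submodule k A} (hp : IsIdeal k p)
    (hmax : Maximal (fun q ↦ q ∈ S ∧ Disjoint (q : Set A) M) p) :
    p ≠ ⊤ ∧ ∀ I ∈ S, ∀ J ∈ S, I * J ≤ p → I ≤ p ∨ J ≤ p := by
  obtain ⟨hpS, hdisj⟩ := hmax.prop
  constructor
  · rintro rfl
    obtain ⟨z, hz⟩ := hne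
    exact Set.disjoint_left.1 hdisj Submodule.mem_top hz
  · intro I hI J hJ hIJ
    by_contra! ⟨hIp, hJp⟩
    obtain ⟨z, hz, hzM⟩ := hM _ (hS hpS hI) _ (hS hpS hJ)
      (sup_inter_nonempty_of_maximal_disjoint hS hmax hI hIp)
      (sup_inter_nonempty_of_maximal_disjoint hS hmax hJ hJp)
    exact Set.disjoint_left.1 hdisj (hp.sup_mul_sup_le hIJ hz) hzM

end

/-- If `M` is an `Hm`-system and `𝔭` is an `H`-stable ideal maximal with respect to
`𝔭 ∩ M = ∅`, then `𝔭` is `H`-prime. -/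
theorem maximal_disjoint_isHPrime (ξ : PartialModuleAlgebra k H A) (M : Set A)
    (hM : HmSystem k ξ M) (p : Submodule k A) (hp : IsIdeal k p) (hs : Hstable k ξ p)
    (hdisj : (p : Set A) ∩ M = ∅)
    (hmax : ∀ q : Submodule k A, IsIdeal k q → Hstable k ξ q → p ≤ q →
      (q : Set A) ∩ M = ∅ → q = p) :
    IsHPrime k ξ p := by
  have hmaximal : Maximal (fun q ↦ q ∈ stableIdeals ξ ∧ Disjoint (q : Set A) M) p :=
    ⟨⟨⟨hp, hs⟩, Set.disjoint_iff_inter_eq_empty.2 hdisj⟩, fun q hq hpq ↦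
      (hmax q hq.1.1 hq.1.2 hpq hq.2.inter_eq).le⟩
  obtain ⟨hproper, hprime⟩ := maximal_disjoint_isHPrime_general (supClosed_stableIdeals ξ) hM.1
    (fun _ hI _ hJ ↦ hM.mul_inter_nonempty hI.1 hI.2 hJ.2) hp hmaximal
  refine ⟨hp, hs, hproper, fun I J hI hIs hJ hJs hIJ ↦ ?_⟩
  exact hprime I ⟨hI, hIs⟩ J ⟨hJ, hJs⟩ (idealProd_eq_mul k I J ▸ hIJ)
end
end

section
/- Let A be a partial H-module algebra. If 𝒫 is a prime (respectively semiprime) ideal of A, then (𝒫:H) = {x ∈ 𝒫 : H·x ⊆ 𝒫} is an H-prime (respectively H-semiprime) ideal of A. -/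
open TensorProduct

noncomputable section

variable (k : Type*) [Field k]

variable {H A : Type*} [Ring H] [HopfAlgebra k H] [Ring A] [Algebra k A]

/-- A prime ideal of `A` (in the two-sided, ideal-theoretic sense). -/
def IsPrimeIdeal (P : Submodule k A) : Prop :=
  IsIdeal k P ∧ P ≠ ⊤ ∧
    ∀ I J : Submodule k A, IsIdeal k I → IsIdeal k J → idealProd k I J ≤ P → I ≤ P ∨ J ≤ P

/-- A semiprime ideal of `A`. -/
def IsSemiprimeIdeal (P : Submodule k A) : Prop :=
  IsIdeal k P ∧ P ≠ ⊤ ∧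
    ∀ I : Submodule k A, IsIdeal k I → idealProd k I I ≤ P → I ≤ P

/- For an ideal `P`, the identities `h·(xb) = Σ (h₁·x)(h₂·b)` and `h·(bx) = Σ (h₁·b)(h₂·x)` show
that `(P : H)` is an ideal, and `h·(g·x) = Σ (h₁·1)(h₂g·x)` that it is `H`-stable; it is therefore
the largest `H`-stable ideal inside `P`. If `I` and `J` are `H`-stable ideals with
`IJ ⊆ (P : H) ⊆ P`, primeness of `P` puts one of them inside `P`, hence inside `(P : H)`; the
semiprime case is `I = J`. -/

section

variable {k} {ξ : PartialModuleAlgebra k H A} {P I : Submodule k A}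

theorem sweedler_eq_sum_repr {ι : Type*} (f g : H →ₗ[k] A) {h : H} (r : Coalgebra.Repr k h ι) :
    sweedler k f g h = ∑ i ∈ r.index, f (r.left i) * g (r.right i) := by
  simp [sweedler, ← r.eq]

theorem sweedler_mem {f g : H →ₗ[k] A} (hfg : ∀ a b, f a * g b ∈ P) (h : H) :
    sweedler k f g h ∈ P := by
  rw [sweedler_eq_sum_repr f g (Coalgebra.Repr.arbitrary k h)]
  exact sum_mem fun _ _ => hfg _ _

theorem mem_colonH_iff {x : A} : x ∈ colonH k ξ P ↔ ∀ h, ξ.act h x ∈ P := by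
  simp only [colonH, Submodule.mem_inf, Submodule.mem_iInf, Submodule.mem_comap]
  exact and_iff_right_of_imp fun hx => ξ.one_act x ▸ hx 1

theorem colonH_le : colonH k ξ P ≤ P := inf_le_left

theorem colonH_ne_top (hP : P ≠ ⊤) : colonH k ξ P ≠ ⊤ :=
  ne_top_of_le_ne_top hP colonH_le

theorem Hstable.le_colonH (hI : Hstable k ξ I) (hIP : I ≤ P) : I ≤ colonH k ξ P :=
  fun x hx => mem_colonH_iff.2 fun h => hIP (hI h x hx)

theorem IsIdeal.isIdeal_colonH (hP : IsIdeal k P) : IsIdeal k (colonH k ξ P) := by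
  intro a ha b
  rw [mem_colonH_iff] at ha
  refine ⟨mem_colonH_iff.2 fun h => ?_, mem_colonH_iff.2 fun h => ?_⟩ <;> rw [ξ.act_mul]
  · exact sweedler_mem (fun h₁ _ => (hP _ (ha h₁) _).1) h
  · exact sweedler_mem (fun _ h₂ => (hP _ (ha h₂) _).2) h

theorem IsIdeal.hstable_colonH (hP : IsIdeal k P) : Hstable k ξ (colonH k ξ P) := by
  intro g x hx
  rw [mem_colonH_iff] at hx ⊢
  intro h
  rw [ξ.act_act]
  exact sweedler_mem (fun _ h₂ => (hP _ (hx (h₂ * g)) _).2) h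

theorem IsPrimeIdeal.isHPrime_colonH (hP : IsPrimeIdeal k P) : IsHPrime k ξ (colonH k ξ P) := by
  obtain ⟨ideal, ne_top, prime⟩ := hP
  refine ⟨ideal.isIdeal_colonH, ideal.hstable_colonH, colonH_ne_top ne_top, ?_⟩
  intro I J hI hIstable hJ hJstable hIJ
  exact (prime I J hI hJ (hIJ.trans colonH_le)).imp hIstable.le_colonH hJstable.le_colonH

theorem IsSemiprimeIdeal.isHSemiprime_colonH (hP : IsSemiprimeIdeal k P) :
    IsHSemiprime k ξ (colonH k ξ P) := by
  obtain ⟨ideal, ne_top, semiprime⟩ := hP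
  refine ⟨ideal.isIdeal_colonH, ideal.hstable_colonH, colonH_ne_top ne_top, ?_⟩
  intro I hI hIstable hII
  exact hIstable.le_colonH (semiprime I hI (hII.trans colonH_le))

end

/-- If `𝒫` is a prime (resp. semiprime) ideal of `A`, then `(𝒫 : H)` is `H`-prime
(resp. `H`-semiprime). -/
theorem colonH_prime_semiprime (ξ : PartialModuleAlgebra k H A) (P : Submodule k A) :
    (IsPrimeIdeal k P → IsHPrime k ξ (colonH k ξ P)) ∧
    (IsSemiprimeIdeal k P → IsHSemiprime k ξ (colonH k ξ P)) :=
  ⟨IsPrimeIdeal.isHPrime_colonH, IsSemiprimeIdeal.isHSemiprime_colonH⟩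
end
end
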